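/- arXiv:1603.03117 — 2 statements merged into one kernel-verified Lean document; each statement's English description precedes it below -/
import Mathlib

section
/- Assume f(0) = 0 and f'_y(0) ≠ 0. Then for any m > 0 there exists δ > 0 such that for all (x,y) with |x| ≤ m|y|³ and 0 < |y| ≤ δ, the equation X(t,x,y) = −x admits a unique solution t = T̃(x,y) in the range |t| ≤ (4m/|f'_y(0)|)·y². Moreover, the function T̃ is C² on the region {(x,y) : ∛(|x|/m) < |y| < δ}. -/
open Set Filter Topology

/-- Partial derivative in the second variable. -/
noncomputable def pdy (f : ℝ → ℝ → ℝ) (a b : ℝ) : ℝ := deriv (fun y => f a y) b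

/-- Real cube root (for nonnegative arguments). -/
noncomputable def cbrt (s : ℝ) : ℝ := s ^ ((1 : ℝ) / 3)

/-!
Inside the cusp `|t| ≤ K y²`, `|x| ≤ m |y|³` the variables `t` and `x` are `o(y)`, so the
horizontal speed `∂ₜX = f(X, Y)` there is `c y + o(y)` with `c = f'_y(0)`; in particular
`|∂ₜX| ≥ k |y|` for any prescribed `k < |c|` once `y` is small. Hence `t ↦ X(t,x,y) + x` is
injective on `|t| ≤ K y²`, and its values spread over a distance at least `k |y| · K y²` to either
side of the value `2x` at `t = 0`. Since `|2x| ≤ 2m |y|³`, it has a unique zero as soon as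
`2m < k K`, which can be arranged when `K > 2m / |c|`. Smoothness of the zero is the implicit
function theorem: uniqueness identifies the zero with the local implicit function.
-/

open Metric Asymptotics

section ImplicitFunction

theorem contDiffAt_of_eventually_unique_solution {𝕜 E₁ E₂ F : Type*} [RCLike 𝕜]
    [NormedAddCommGroup E₁] [NormedSpace 𝕜 E₁] [CompleteSpace E₁]
    [NormedAddCommGroup E₂] [NormedSpace 𝕜 E₂] [CompleteSpace E₂]
    [NormedAddCommGroup F] [NormedSpace 𝕜 F] [CompleteSpace F]
    {n : WithTop ℕ∞} {H : E₁ × E₂ → F} {T : E₁ → E₂} {p : E₁}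
    (hH : ContDiffAt 𝕜 n H (p, T p)) (hn : n ≠ 0)
    (hinv : (fderiv 𝕜 H (p, T p) ∘L .inr 𝕜 E₁ E₂).IsInvertible)
    (hT : ∀ᶠ q in 𝓝 (p, T p), H q = H (p, T p) → q.2 = T q.1) :
    ContDiffAt 𝕜 n T p := by
  have hψ : ContDiffAt 𝕜 n (hH.implicitFunction hn hinv) p :=
    hH.contDiffAt_implicitFunction hn hinv
  have hψp : hH.implicitFunction hn hinv p = T p := hH.implicitFunction_apply_self hn hinv
  have hgraph : Tendsto (fun q => (q, hH.implicitFunction hn hinv q)) (𝓝 p) (𝓝 (p, T p)) := by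
    simpa only [ContinuousAt, hψp, id] using continuousAt_id.prodMk hψ.continuousAt
  refine hψ.congr_of_eventuallyEq ?_
  filter_upwards [hgraph.eventually hT, hH.eventually_apply_implicitFunction hn hinv]
    with q hq hsol
  exact (hq hsol).symm

theorem isInvertible_fderiv_comp_inr_of_deriv_ne_zero {𝕜 E : Type*} [NontriviallyNormedField 𝕜]
    [NormedAddCommGroup E] [NormedSpace 𝕜 E] {H : E × 𝕜 → 𝕜} {p : E} {t : 𝕜}
    (hH : DifferentiableAt 𝕜 H (p, t)) (hd : deriv (fun s => H (p, s)) t ≠ 0) :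
    (fderiv 𝕜 H (p, t) ∘L .inr 𝕜 E 𝕜).IsInvertible := by
  have hpartial : HasDerivAt (fun s => H (p, s)) (fderiv 𝕜 H (p, t) (0, 1)) t :=
    hH.hasFDerivAt.comp_hasDerivAt t ((hasDerivAt_const t p).prodMk (hasDerivAt_id t))
  refine ⟨ContinuousLinearEquiv.unitsEquivAut 𝕜 (Units.mk0 _ hd), ?_⟩
  ext
  simp [hpartial.deriv]

end ImplicitFunction

section UniqueZero

theorem mul_abs_sub_le_abs_image_sub_of_le_abs_deriv {D : Set ℝ} (hD : Convex ℝ D) {h : ℝ → ℝ}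
    {C : ℝ} (hcont : ContinuousOn h D) (hdiff : DifferentiableOn ℝ h (interior D))
    (hC : ∀ t ∈ interior D, C ≤ |deriv h t|) {s t : ℝ} (hs : s ∈ D) (ht : t ∈ D) :
    C * |t - s| ≤ |h t - h s| := by
  wlog hst : s < t generalizing s t
  · rcases (not_lt.1 hst).eq_or_lt with rfl | hts
    · simp
    · simpa only [abs_sub_comm] using this ht hs hts
  have hsub : Icc s t ⊆ D := hD.ordConnected.out hs ht
  have hsub' : Ioo s t ⊆ interior D :=
    interior_maximal (Ioo_subset_Icc_self.trans hsub) isOpen_Ioo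
  obtain ⟨ξ, hξ, hslope⟩ := exists_deriv_eq_slope h hst (hcont.mono hsub) (hdiff.mono hsub')
  have hts : 0 < |t - s| := abs_pos.2 (sub_pos.2 hst).ne'
  rw [← le_div_iff₀ hts, ← abs_div, ← hslope]
  exact hC ξ (hsub' hξ)

theorem injOn_of_mul_abs_sub_le {h : ℝ → ℝ} {D : Set ℝ} {C : ℝ} (hC : 0 < C)
    (hexp : ∀ s ∈ D, ∀ t ∈ D, C * |t - s| ≤ |h t - h s|) : InjOn h D := by
  intro s hs t ht hst
  have hle : C * |t - s| ≤ 0 := by simpa [hst] using hexp s hs t ht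
  have habs : |t - s| ≤ 0 := nonpos_of_mul_nonpos_right hle hC
  exact (sub_eq_zero.1 (abs_nonpos_iff.1 habs)).symm

theorem exists_mem_ball_eq_zero_of_mul_abs_sub_le {h : ℝ → ℝ} {c r C : ℝ} (hC : 0 < C)
    (hcont : ContinuousOn h (closedBall c r))
    (hexp : ∀ s ∈ closedBall c r, ∀ t ∈ closedBall c r, C * |t - s| ≤ |h t - h s|)
    (hc : |h c| < C * r) :
    ∃ t ∈ ball c r, h t = 0 := by
  have hr : 0 < r := pos_of_mul_pos_right ((abs_nonneg _).trans_lt hc) hC.le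
  have hinj : InjOn h (closedBall c r) := injOn_of_mul_abs_sub_le hC hexp
  rw [Real.closedBall_eq_Icc] at hcont hexp hinj
  rw [Real.ball_eq_Ioo]
  have hc_mem : c ∈ Icc (c - r) (c + r) := ⟨by linarith, by linarith⟩
  have hl_mem : c - r ∈ Icc (c - r) (c + r) := ⟨le_rfl, by linarith⟩
  have hr_mem : c + r ∈ Icc (c - r) (c + r) := ⟨by linarith, le_rfl⟩
  have hleft : C * r ≤ |h c - h (c - r)| := by
    simpa [abs_of_pos hr] using hexp _ hl_mem _ hc_mem
  have hright : C * r ≤ |h (c + r) - h c| := by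
    simpa [abs_of_pos hr] using hexp _ hc_mem _ hr_mem
  obtain ⟨hlo, hhi⟩ := abs_lt.1 hc
  rcases hcont.strictMonoOn_of_injOn_Icc' (by linarith) hinj with hmono | hanti
  · rw [abs_of_pos (sub_pos.2 (hmono hl_mem hc_mem (by linarith)))] at hleft
    rw [abs_of_pos (sub_pos.2 (hmono hc_mem hr_mem (by linarith)))] at hright
    exact intermediate_value_Ioo (by linarith) hcont ⟨by linarith, by linarith⟩
  · rw [abs_of_neg (sub_neg.2 (hanti hl_mem hc_mem (by linarith)))] at hleft
    rw [abs_of_neg (sub_neg.2 (hanti hc_mem hr_mem (by linarith)))] at hright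
    exact intermediate_value_Ioo' (by linarith) hcont ⟨by linarith, by linarith⟩

theorem exists_unique_zero_of_le_abs_deriv {h : ℝ → ℝ} {c r C : ℝ} (hC : 0 < C)
    (hder : ∀ t ∈ closedBall c r, C ≤ |deriv h t|) (hc : |h c| < C * r) :
    ∃ t ∈ ball c r, h t = 0 ∧ ∀ s ∈ closedBall c r, h s = 0 → s = t := by
  have hdiff : ∀ t ∈ closedBall c r, DifferentiableAt ℝ h t := fun t ht =>
    differentiableAt_of_deriv_ne_zero (abs_pos.1 (hC.trans_le (hder t ht)))
  have hcont : ContinuousOn h (closedBall c r) := fun t ht =>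
    (hdiff t ht).continuousAt.continuousWithinAt
  have hexp : ∀ s ∈ closedBall c r, ∀ t ∈ closedBall c r, C * |t - s| ≤ |h t - h s| :=
    fun s hs t ht => mul_abs_sub_le_abs_image_sub_of_le_abs_deriv (convex_closedBall c r) hcont
      (fun u hu => (hdiff u (interior_subset hu)).differentiableWithinAt)
      (fun u hu => hder u (interior_subset hu)) hs ht
  obtain ⟨t, ht, hzero⟩ := exists_mem_ball_eq_zero_of_mul_abs_sub_le hC hcont hexp hc
  exact ⟨t, ht, hzero, fun s hs hs0 =>
    injOn_of_mul_abs_sub_le hC hexp hs (ball_subset_closedBall ht) (hs0.trans hzero.symm)⟩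

theorem exists_contDiffOn_unique_zero_of_le_abs_deriv {E : Type*} [NormedAddCommGroup E]
    [NormedSpace ℝ E] [CompleteSpace E] {n : WithTop ℕ∞} (hn : n ≠ 0) {H : E × ℝ → ℝ} {A : Set E}
    {c r C : E → ℝ} (hc : ContinuousOn c A) (hr : ContinuousOn r A) (hC : ∀ p ∈ A, 0 < C p)
    (hH : ∀ p ∈ A, ∀ t ∈ closedBall (c p) (r p), ContDiffAt ℝ n H (p, t))
    (hder : ∀ p ∈ A, ∀ t ∈ closedBall (c p) (r p), C p ≤ |deriv (fun s => H (p, s)) t|)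
    (hsmall : ∀ p ∈ A, |H (p, c p)| < C p * r p) :
    ∃ T : E → ℝ,
      (∀ p ∈ A, T p ∈ ball (c p) (r p) ∧ H (p, T p) = 0 ∧
        ∀ s ∈ closedBall (c p) (r p), H (p, s) = 0 → s = T p) ∧
      ContDiffOn ℝ n T (interior A) := by
  choose! T hball hzero huniq using fun p hp =>
    exists_unique_zero_of_le_abs_deriv (hC p hp) (hder p hp) (hsmall p hp)
  refine ⟨T, fun p hp => ⟨hball p hp, hzero p hp, huniq p hp⟩, fun p hp => ?_⟩
  have hpA : p ∈ A := interior_subset hp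
  have hA : A ∈ 𝓝 p := mem_interior_iff_mem_nhds.1 hp
  have hTp := ball_subset_closedBall (hball p hpA)
  have hd : deriv (fun s => H (p, s)) (T p) ≠ 0 :=
    abs_pos.1 ((hC p hpA).trans_le (hder p hpA _ hTp))
  have hHp := hH p hpA _ hTp
  refine (contDiffAt_of_eventually_unique_solution hHp hn
    (isInvertible_fderiv_comp_inr_of_deriv_ne_zero (hHp.differentiableAt hn) hd)
    ?_).contDiffWithinAt
  have hfst : Tendsto Prod.fst (𝓝 (p, T p)) (𝓝 p) := continuousAt_fst
  have hnear : ∀ᶠ q : E × ℝ in 𝓝 (p, T p), dist q.2 (c q.1) < r q.1 :=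
    (continuousAt_snd.dist (ContinuousAt.comp (hc.continuousAt hA) hfst)).eventually_lt
      (ContinuousAt.comp (hr.continuousAt hA) hfst) (hball p hpA)
  filter_upwards [hnear, hfst.eventually hA] with q hq hqA hqH
  exact huniq q.1 hqA q.2 hq.le (hqH.trans (hzero p hpA))

end UniqueZero

section Cusp

/-- The filter of points `(t, x, y)` with `y → 0` inside the cusp `|t| ≤ K y²`, `|x| ≤ m |y|³`.
Eventually along it means for all small `y`, uniformly in the admissible `t` and `x`. -/
def cuspFilter (K m : ℝ) : Filter (ℝ × ℝ × ℝ) :=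
  comap (fun p => p.2.2) (𝓝 0) ⊓ 𝓟 {p | |p.1| ≤ K * p.2.2 ^ 2 ∧ |p.2.1| ≤ m * |p.2.2| ^ 3}

/-- The points `(x, y)` of the cusp `|x| ≤ m |y|³` with `0 < |y| ≤ δ`, where `T̃` is defined. -/
def cuspRegion (m δ : ℝ) : Set (ℝ × ℝ) :=
  {p | |p.1| ≤ m * |p.2| ^ 3 ∧ 0 < |p.2| ∧ |p.2| ≤ δ}

variable {K m : ℝ}

theorem eventually_cuspFilter {P : ℝ × ℝ × ℝ → Prop} :
    (∀ᶠ p in cuspFilter K m, P p) ↔ ∃ δ > 0, ∀ t x y : ℝ, |y| ≤ δ →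
      |t| ≤ K * y ^ 2 → |x| ≤ m * |y| ^ 3 → P (t, x, y) := by
  rw [cuspFilter, ((nhds_basis_closedBall.comap _).inf_principal _).eventually_iff]
  simp [and_imp]

theorem tendsto_snd_snd_cuspFilter : Tendsto (fun p => p.2.2) (cuspFilter K m) (𝓝 0) :=
  tendsto_comap.mono_left inf_le_left

theorem isLittleO_sub_axis_cuspFilter :
    (fun p => p - (0, 0, p.2.2)) =o[cuspFilter K m] fun p => p.2.2 := by
  have hcusp : ∀ᶠ p in cuspFilter K m, |p.1| ≤ K * p.2.2 ^ 2 ∧ |p.2.1| ≤ m * |p.2.2| ^ 3 :=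
    mem_inf_of_right (mem_principal_self _)
  have ht : (fun p => p.1) =o[cuspFilter K m] fun p => p.2.2 :=
    (IsBigO.of_bound K (hcusp.mono fun p hp => by simpa using hp.1)).trans_isLittleO
      ((isLittleO_pow_id one_lt_two).comp_tendsto tendsto_snd_snd_cuspFilter)
  have hx : (fun p => p.2.1) =o[cuspFilter K m] fun p => p.2.2 :=
    (IsBigO.of_bound m (hcusp.mono fun p hp => by simpa using hp.2)).trans_isLittleO
      ((isLittleO_pow_id (by norm_num : 1 < 3)).comp_tendsto tendsto_snd_snd_cuspFilter)
  refine (ht.prod_left (hx.prod_left (isLittleO_zero _ _))).congr_left fun p => ?_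
  simp [Prod.ext_iff]

theorem tendsto_axis_cuspFilter :
    Tendsto (fun p => ((0, 0, p.2.2) : ℝ × ℝ × ℝ)) (cuspFilter K m) (𝓝 0) :=
  tendsto_const_nhds.prodMk_nhds (tendsto_const_nhds.prodMk_nhds tendsto_snd_snd_cuspFilter)

theorem cuspFilter_le_nhds : cuspFilter K m ≤ 𝓝 0 := by
  have := (isLittleO_sub_axis_cuspFilter.trans_tendsto tendsto_snd_snd_cuspFilter).add
    (tendsto_axis_cuspFilter (K := K) (m := m))
  simpa [Tendsto] using this

theorem isLittleO_sub_mul_cuspFilter {v : ℝ × ℝ × ℝ → ℝ} {v' : ℝ × ℝ × ℝ →L[ℝ] ℝ} {c : ℝ}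
    (hv : HasStrictFDerivAt v v' 0) (hv0 : v 0 = 0)
    (hc : HasDerivAt (fun y => v (0, 0, y)) c 0) :
    (fun p => v p - c * p.2.2) =o[cuspFilter K m] fun p => p.2.2 := by
  have hoff : (fun p => v p - v (0, 0, p.2.2)) =o[cuspFilter K m] fun p => p.2.2 :=
    (hv.isBigO_sub.comp_tendsto (Tendsto.prodMk_nhds (tendsto_id.mono_left cuspFilter_le_nhds)
      tendsto_axis_cuspFilter)).trans_isLittleO isLittleO_sub_axis_cuspFilter
  have haxis : (fun p => v (0, 0, p.2.2) - c * p.2.2) =o[cuspFilter K m] fun p => p.2.2 := by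
    have := hc.isLittleO.comp_tendsto (tendsto_snd_snd_cuspFilter (K := K) (m := m))
    simpa [Function.comp_def, ← Prod.zero_eq_mk, hv0, mul_comm c] using this
  exact (hoff.add haxis).congr_left fun p => sub_add_sub_cancel _ _ _

theorem eventually_mul_abs_le_of_isLittleO_sub_mul {α : Type*} {l : Filter α} {φ ψ : α → ℝ}
    {c k : ℝ} (h : (fun a => φ a - c * ψ a) =o[l] ψ) (hk : k < |c|) :
    ∀ᶠ a in l, k * |ψ a| ≤ |φ a| := by
  filter_upwards [h.def (sub_pos.2 hk)] with a ha
  simp only [Real.norm_eq_abs] at ha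
  have htri : |c| * |ψ a| ≤ |φ a| + |φ a - c * ψ a| := by
    rw [← abs_mul, add_comm, abs_sub_comm]
    exact sub_le_iff_le_add.1 (abs_sub_abs_le_abs_sub _ _)
  linarith

end Cusp

section ReflectionTime

/-- `T` is the paper's `T̃` on `A`: at each `p = (x, y)` of `A`, `T p` is the unique time `t` in the
range `|t| ≤ K y²` at which the first coordinate of the solution issued from `p` equals `-x`. -/
def IsReflectionTimeOn (X : ℝ → ℝ → ℝ → ℝ) (K : ℝ) (A : Set (ℝ × ℝ)) (T : ℝ × ℝ → ℝ) : Prop :=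
  ∀ p ∈ A, X (T p) p.1 p.2 = -p.1 ∧ |T p| ≤ K * p.2 ^ 2 ∧
    ∀ t, |t| ≤ K * p.2 ^ 2 → X t p.1 p.2 = -p.1 → t = T p

variable {n : WithTop ℕ∞} {X : ℝ → ℝ → ℝ → ℝ} {V : Set (ℝ × ℝ × ℝ)} {m K : ℝ}

theorem exists_reflection_time_of_le_abs_deriv {k δ : ℝ} (hn : n ≠ 0)
    (hX0 : ∀ x y, X 0 x y = x) (hk : 0 < k) (hmk : 2 * m < k * K)
    (hX : ∀ t x y : ℝ, |y| ≤ δ → |t| ≤ K * y ^ 2 → |x| ≤ m * |y| ^ 3 →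
      ContDiffAt ℝ n (fun p : ℝ × ℝ × ℝ => X p.1 p.2.1 p.2.2) (t, x, y))
    (hspeed : ∀ t x y : ℝ, |y| ≤ δ → |t| ≤ K * y ^ 2 → |x| ≤ m * |y| ^ 3 →
      k * |y| ≤ |deriv (fun s => X s x y) t|) :
    ∃ T : ℝ × ℝ → ℝ,
      IsReflectionTimeOn X K (cuspRegion m δ) T ∧ ContDiffOn ℝ n T (interior (cuspRegion m δ)) := by
  let H : (ℝ × ℝ) × ℝ → ℝ := fun q => X q.2 q.1.1 q.1.2 + q.1.1
  have hH : ∀ p ∈ cuspRegion m δ, ∀ t ∈ closedBall 0 (K * p.2 ^ 2), ContDiffAt ℝ n H (p, t) := by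
    rintro ⟨x, y⟩ ⟨hx, -, hy⟩ t ht
    exact (ContDiffAt.comp (g := fun p : ℝ × ℝ × ℝ => X p.1 p.2.1 p.2.2)
      (f := fun q : (ℝ × ℝ) × ℝ => (q.2, q.1.1, q.1.2)) ((x, y), t)
      (hX t x y hy (mem_closedBall_zero_iff.1 ht) hx) (by fun_prop)).add contDiffAt_fst.fst
  have hder : ∀ p ∈ cuspRegion m δ, ∀ t ∈ closedBall 0 (K * p.2 ^ 2),
      k * |p.2| ≤ |deriv (fun s => H (p, s)) t| := by
    rintro ⟨x, y⟩ ⟨hx, -, hy⟩ t ht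
    simpa only [H, deriv_add_const] using hspeed t x y hy (mem_closedBall_zero_iff.1 ht) hx
  have hsmall : ∀ p ∈ cuspRegion m δ, |H (p, 0)| < k * |p.2| * (K * p.2 ^ 2) := by
    rintro ⟨x, y⟩ ⟨hx, hy, -⟩
    calc |X 0 x y + x| = 2 * |x| := by rw [hX0, ← two_mul, abs_mul, abs_two]
      _ ≤ 2 * m * |y| ^ 3 := by linarith
      _ < k * K * |y| ^ 3 := by gcongr
      _ = k * |y| * (K * y ^ 2) := by rw [← sq_abs y]; ring
  obtain ⟨T, hT, hsmooth⟩ := exists_contDiffOn_unique_zero_of_le_abs_deriv hn (by fun_prop)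
    (by fun_prop) (fun p hp => mul_pos hk hp.2.1) hH hder hsmall
  refine ⟨T, fun p hp => ?_, hsmooth⟩
  obtain ⟨hball, hzero, huniq⟩ := hT p hp
  simp only [H, mem_ball_zero_iff, mem_closedBall_zero_iff, Real.norm_eq_abs,
    ← eq_neg_iff_add_eq_zero] at hball hzero huniq
  exact ⟨hzero, hball.le, huniq⟩

theorem exists_reflection_time_of_hasStrictFDerivAt {v : ℝ × ℝ × ℝ → ℝ} {v' : ℝ × ℝ × ℝ →L[ℝ] ℝ}
    {c : ℝ} (hn : n ≠ 0) (hV : V ∈ 𝓝 0)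
    (hX : ContDiffOn ℝ n (fun p : ℝ × ℝ × ℝ => X p.1 p.2.1 p.2.2) V)
    (hode : ∀ t x y : ℝ, (t, x, y) ∈ V → HasDerivAt (fun s => X s x y) (v (t, x, y)) t)
    (hX0 : ∀ x y, X 0 x y = x) (hv : HasStrictFDerivAt v v' 0) (hv0 : v 0 = 0)
    (hc : HasDerivAt (fun y => v (0, 0, y)) c 0) (hc0 : c ≠ 0) (hm : 0 ≤ m)
    (hK : 2 * m / |c| < K) :
    ∃ δ > 0, ∃ T : ℝ × ℝ → ℝ,
      IsReflectionTimeOn X K (cuspRegion m δ) T ∧ ContDiffOn ℝ n T (interior (cuspRegion m δ)) := by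
  have hKpos : 0 < K := lt_of_le_of_lt (by positivity) hK
  obtain ⟨k, hmk, hkc⟩ : ∃ k, 2 * m / K < k ∧ k < |c| :=
    exists_between ((div_lt_comm₀ (abs_pos.2 hc0) hKpos).1 hK)
  have hk : 0 < k := lt_of_le_of_lt (by positivity) hmk
  have hspeed : ∀ᶠ p in cuspFilter K m, k * |p.2.2| ≤ |v p| :=
    eventually_mul_abs_le_of_isLittleO_sub_mul (isLittleO_sub_mul_cuspFilter hv hv0 hc) hkc
  have hVcusp : ∀ᶠ p in cuspFilter K m, V ∈ 𝓝 p :=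
    cuspFilter_le_nhds (eventually_mem_nhds_iff.2 hV)
  obtain ⟨δ, hδ, hcusp⟩ := eventually_cuspFilter.1 (hspeed.and hVcusp)
  refine ⟨δ, hδ, exists_reflection_time_of_le_abs_deriv hn hX0 hk ((div_lt_iff₀ hKpos).1 hmk)
    (fun t x y hy ht hx => hX.contDiffAt (hcusp t x y hy ht hx).2) fun t x y hy ht hx => ?_⟩
  obtain ⟨hle, hmem⟩ := hcusp t x y hy ht hx
  rwa [(hode t x y (mem_of_mem_nhds hmem)).deriv]

end ReflectionTime

theorem cbrt_lt_iff_lt_pow {s r : ℝ} (hs : 0 ≤ s) (hr : 0 ≤ r) : cbrt s < r ↔ s < r ^ 3 := by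
  rw [cbrt, one_div, Real.rpow_inv_lt_iff_of_pos hs hr three_pos, Real.rpow_ofNat]

theorem setOf_cbrt_lt_subset_interior_cuspRegion {m : ℝ} (hm : 0 < m) (δ : ℝ) :
    {p : ℝ × ℝ | cbrt (|p.1| / m) < |p.2| ∧ |p.2| < δ} ⊆ interior (cuspRegion m δ) := by
  have hlt : ∀ p : ℝ × ℝ, cbrt (|p.1| / m) < |p.2| ↔ |p.1| < m * |p.2| ^ 3 := fun p => by
    rw [cbrt_lt_iff_lt_pow (by positivity) (abs_nonneg _), div_lt_iff₀' hm]
  have hopen : IsOpen {p : ℝ × ℝ | |p.1| < m * |p.2| ^ 3 ∧ |p.2| < δ} :=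
    (isOpen_lt (by fun_prop) (by fun_prop)).and (isOpen_lt (by fun_prop) (by fun_prop))
  simp only [hlt]
  refine interior_maximal (fun p hp => ⟨hp.1.le, ?_, hp.2.le⟩) hopen
  have hcube : 0 < |p.2| ^ 3 := pos_of_mul_pos_right ((abs_nonneg _).trans_lt hp.1) hm.le
  exact (by decide : Odd 3).pow_pos_iff.1 hcube

theorem stmt_2_general {n : WithTop ℕ∞} (hn : n ≠ 0) {f : ℝ → ℝ → ℝ} {X Y : ℝ → ℝ → ℝ → ℝ}
    (hf : ContDiffAt ℝ 1 (fun p : ℝ × ℝ => f p.1 p.2) (0, 0))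
    {V : Set (ℝ × ℝ × ℝ)} (hV : V ∈ 𝓝 (0, 0, 0))
    (hX : ContDiffOn ℝ n (fun p : ℝ × ℝ × ℝ => X p.1 p.2.1 p.2.2) V)
    (hY : ContDiffAt ℝ 1 (fun p : ℝ × ℝ × ℝ => Y p.1 p.2.1 p.2.2) (0, 0, 0))
    (hode : ∀ t x y : ℝ, (t, x, y) ∈ V →
      HasDerivAt (fun s => X s x y) (f (X t x y) (Y t x y)) t)
    (hinit : ∀ x y : ℝ, X 0 x y = x ∧ Y 0 x y = y) (hf0 : f 0 0 = 0) (hfy0 : pdy f 0 0 ≠ 0)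
    {m K : ℝ} (hm : 0 < m) (hK : 2 * m / |pdy f 0 0| < K) :
    ∃ δ > (0 : ℝ), ∃ T : ℝ → ℝ → ℝ,
      (∀ x y : ℝ, |x| ≤ m * |y| ^ 3 → 0 < |y| → |y| ≤ δ →
        X (T x y) x y = -x ∧ |T x y| ≤ K * y ^ 2 ∧
        ∀ t : ℝ, |t| ≤ K * y ^ 2 → X t x y = -x → t = T x y) ∧
      ContDiffOn ℝ n (fun p : ℝ × ℝ => T p.1 p.2)
        {p : ℝ × ℝ | cbrt (|p.1| / m) < |p.2| ∧ |p.2| < δ} := by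
  set v : ℝ × ℝ × ℝ → ℝ := fun p => f (X p.1 p.2.1 p.2.2) (Y p.1 p.2.1 p.2.2) with hv_def
  have hv_axis : ∀ y, v (0, 0, y) = f 0 y := fun y => by simp [hv_def, hinit]
  have hv : ContDiffAt ℝ 1 v 0 := by
    have hX1 := (hX.contDiffAt hV).of_le (ENat.one_le_iff_ne_zero_withTop.2 hn)
    refine ContDiffAt.comp (g := fun p : ℝ × ℝ => f p.1 p.2) 0 ?_ (hX1.prodMk hY)
    simpa [hinit] using hf
  have hc : HasDerivAt (fun y => v (0, 0, y)) (pdy f 0 0) 0 := by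
    simpa only [hv_axis, pdy] using (differentiableAt_of_deriv_ne_zero hfy0).hasDerivAt
  obtain ⟨δ, hδ, T, hT, hsmooth⟩ := exists_reflection_time_of_hasStrictFDerivAt hn hV hX hode
    (fun x y => (hinit x y).1) (hv.hasStrictFDerivAt one_ne_zero) ((hv_axis 0).trans hf0)
    hc hfy0 hm.le hK
  exact ⟨δ, hδ, fun x y => T (x, y), fun x y hx hy hyδ => hT (x, y) ⟨hx, hy, hyδ⟩,
    hsmooth.mono (setOf_cbrt_lt_subset_interior_cuspRegion hm δ)⟩

/-- Lemma 2.2, first part: for any `m > 0` and all `|x| ≤ m|y|³`, `0 < |y| ≤ δ`,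
the equation `X(t,x,y) = -x` has a unique solution `t = T̃(x,y)` in the range
`|t| ≤ (4m/|f'_y(0)|) y²`, and `T̃` is `C²` on `{(x,y) : ∛(|x|/m) < |y| < δ}`. -/
theorem stmt_2
    (f g : ℝ → ℝ → ℝ) (X Y : ℝ → ℝ → ℝ → ℝ)
    (U : Set (ℝ × ℝ)) (hU : U ∈ nhds ((0 : ℝ), (0 : ℝ)))
    (hf : ContDiffOn ℝ 4 (fun p : ℝ × ℝ => f p.1 p.2) U)
    (hg : ContDiffOn ℝ 4 (fun p : ℝ × ℝ => g p.1 p.2) U)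
    (V : Set (ℝ × ℝ × ℝ)) (hV : V ∈ nhds (((0 : ℝ), (0 : ℝ), (0 : ℝ)) : ℝ × ℝ × ℝ))
    (hX : ContDiffOn ℝ 4 (fun p : ℝ × ℝ × ℝ => X p.1 p.2.1 p.2.2) V)
    (hY : ContDiffOn ℝ 4 (fun p : ℝ × ℝ × ℝ => Y p.1 p.2.1 p.2.2) V)
    (hode : ∀ t x y : ℝ, (t, x, y) ∈ V →
      HasDerivAt (fun s => X s x y) (f (X t x y) (Y t x y)) t ∧
      HasDerivAt (fun s => Y s x y) (g (X t x y) (Y t x y)) t)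
    (hinit : ∀ x y : ℝ, X 0 x y = x ∧ Y 0 x y = y)
    (hf0 : f 0 0 = 0)
    (hfy0 : pdy f 0 0 ≠ 0) :
    ∀ m : ℝ, 0 < m → ∃ δ > (0 : ℝ), ∃ Tt : ℝ → ℝ → ℝ,
      (∀ x y : ℝ, |x| ≤ m * |y| ^ 3 → 0 < |y| → |y| ≤ δ →
        X (Tt x y) x y = -x ∧
        |Tt x y| ≤ 4 * m / |pdy f 0 0| * y ^ 2 ∧
        ∀ t : ℝ, |t| ≤ 4 * m / |pdy f 0 0| * y ^ 2 → X t x y = -x → t = Tt x y) ∧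
      ContDiffOn ℝ 2 (fun p : ℝ × ℝ => Tt p.1 p.2)
        {p : ℝ × ℝ | cbrt (|p.1| / m) < |p.2| ∧ |p.2| < δ} := by
  intro m hm
  exact stmt_2_general two_ne_zero ((hf.contDiffAt hU).of_le (by norm_num)) hV
    (hX.of_le (by norm_num)) ((hY.contDiffAt hV).of_le (by norm_num))
    (fun t x y h => (hode t x y h).1) hinit hf0 hfy0 hm (by gcongr; norm_num)
end

section
/- Assume f(0) = 0 and f'_y(0) ≠ 0. Let m > 0 and let T̃(x,y) be the unique solution of X(T̃(x,y),x,y) = −x with |T̃(x,y)| ≤ (4m/|f'_y(0)|)·y², defined for |x| ≤ m|y|³ and |y| small. Define 𝒫̃(x,y) = Y(T̃(x,y),x,y) and β = −2·g(0)/f'_y(0). Then the remainder ℛ̃(x,y) := 𝒫̃(x,y) − y − β·x/y satisfies: ℛ̃(x,y)/y² → 0, ℛ̃'_y(x,y)/y → 0, and ℛ̃'_x(x,y)·y → 0, all as |x| ≤ m|y|³, y → 0. -/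
open Set Filter Topology

/-- Partial derivative in the first variable. -/
noncomputable def pdx (f : ℝ → ℝ → ℝ) (a b : ℝ) : ℝ := deriv (fun x => f x b) a

/-!
Write `φ`, `ψ` for the components of the flow, `a = ∂f/∂y (0)`, and `T` for the solution of
`φ (T, x, y) = -x`. Since `∂φ/∂t = a y + o(y)` as long as `t = O(y²)`, the mean value theorem in `t`
gives both `a y T + 2 x = o(y³)` and the uniqueness of `T` among times of order `y²`. The first fact
and `ψ (T, x, y) = y + g(0) T + o(y²)` yield the expansion of the return map. By the second, `T`
agrees with the implicit function, so its derivative is a quotient of partial derivatives of `φ`,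
and the bounds on the derivatives of the remainder follow from the expansion of these at the origin.

Nothing is known about `T` outside the cusp `|x| ≤ m|y|³`, so all this is differentiability within
the cusp. On its boundary the two-sided `deriv` of a slice may not exist; being then `0`, it is
still dominated by the one-sided derivative.
-/

open Asymptotics

section Calculus

lemma norm_deriv_le_of_hasDerivWithinAt {𝕜 F : Type*} [NontriviallyNormedField 𝕜]
    [NormedAddCommGroup F] [NormedSpace 𝕜 F] {u : 𝕜 → F} {u' : F} {S : Set 𝕜} {s : 𝕜}
    (hS : UniqueDiffWithinAt 𝕜 S s) (hu : HasDerivWithinAt u u' S s) : ‖deriv u s‖ ≤ ‖u'‖ := by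
  by_cases h : DifferentiableAt 𝕜 u s
  · rw [hS.eq_deriv _ h.hasDerivAt.hasDerivWithinAt hu]
  · simp [deriv_zero_of_not_differentiableAt h]

lemma hasStrictFDerivAt_fderiv_apply {𝕜 E F : Type*} [RCLike 𝕜] [NormedAddCommGroup E]
    [NormedSpace 𝕜 E] [NormedAddCommGroup F] [NormedSpace 𝕜 F] {u : E → F} {x : E}
    (hu : ContDiffAt 𝕜 2 u x) (v : E) :
    HasStrictFDerivAt (fun p => fderiv 𝕜 u p v) ((fderiv 𝕜 (fderiv 𝕜 u) x).flip v) x :=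
  (ContinuousLinearMap.apply 𝕜 F v).hasStrictFDerivAt.comp x
    ((hu.fderiv_right (m := 1) (by norm_num)).hasStrictFDerivAt one_ne_zero)

lemma fderiv_apply_inl_of_hasDerivAt {𝕜 E F : Type*} [NontriviallyNormedField 𝕜]
    [NormedAddCommGroup E] [NormedSpace 𝕜 E] [NormedAddCommGroup F] [NormedSpace 𝕜 F]
    {u : 𝕜 × E → F} {p : 𝕜 × E} {d : F} (hu : DifferentiableAt 𝕜 u p)
    (hd : HasDerivAt (fun s => u (s, p.2)) d p.1) : fderiv 𝕜 u p (1, 0) = d :=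
  (hu.hasFDerivAt.comp_hasDerivAt (f := fun s => (s, p.2)) p.1
    ((hasDerivAt_id _).prodMk (hasDerivAt_const _ _))).unique hd

lemma fderiv_apply_inr_of_forall_eq {𝕜 E F G : Type*} [NontriviallyNormedField 𝕜]
    [NormedAddCommGroup E] [NormedSpace 𝕜 E] [NormedAddCommGroup F] [NormedSpace 𝕜 F]
    [NormedAddCommGroup G] [NormedSpace 𝕜 G] {u : E × F → G}
    {L : F →L[𝕜] G} {p : E × F} (hu : DifferentiableAt 𝕜 u p)
    (h : ∀ q, u (p.1, q) = L q) (v : F) : fderiv 𝕜 u p (0, v) = L v := by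
  have hpartial : HasFDerivAt (fun q => u (p.1, q)) ((fderiv 𝕜 u p).comp (.inr 𝕜 E F)) p.2 :=
    hu.hasFDerivAt.comp p.2 (hasFDerivAt_prodMk_right p.1 p.2)
  simp only [h] at hpartial
  exact DFunLike.congr_fun (hpartial.unique L.hasFDerivAt) v

lemma exists_hasStrictFDerivAt_implicit_fst {𝕜 E : Type*} [NontriviallyNormedField 𝕜]
    [CompleteSpace 𝕜] [NormedAddCommGroup E] [NormedSpace 𝕜 E] [CompleteSpace E]
    {Φ : 𝕜 × E → 𝕜} {Φ' : 𝕜 × E →L[𝕜] 𝕜} {p : 𝕜 × E}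
    (hΦ : HasStrictFDerivAt Φ Φ' p) (hne : Φ' (1, 0) ≠ 0) :
    ∃ τ : E → 𝕜, τ p.2 = p.1 ∧
      HasStrictFDerivAt τ (-(Φ' (1, 0))⁻¹ • Φ'.comp (.inr 𝕜 𝕜 E)) p.2 ∧
      ∀ᶠ q in 𝓝 p.2, Φ (τ q, q) = Φ p := by
  have hswap : HasStrictFDerivAt (Φ ∘ Prod.swap)
      (Φ'.comp (ContinuousLinearEquiv.prodComm 𝕜 E 𝕜 : E × 𝕜 →L[𝕜] 𝕜 × E)) p.swap :=
    HasStrictFDerivAt.comp p.swap (by simpa using! hΦ)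
      (ContinuousLinearEquiv.prodComm 𝕜 E 𝕜).hasStrictFDerivAt
  have hpartial : (Φ'.comp (ContinuousLinearEquiv.prodComm 𝕜 E 𝕜 : E × 𝕜 →L[𝕜] 𝕜 × E)).comp
      (.inr 𝕜 E 𝕜) = ContinuousLinearEquiv.unitsEquivAut 𝕜 (Units.mk0 _ hne) := by
    ext; simp
  have hinv := hpartial ▸ ContinuousLinearMap.isInvertible_equiv
  refine ⟨hswap.implicitFunctionOfProdDomain hinv, ?_, ?_, ?_⟩
  · exact (hswap.eventually_apply_eq_iff_implicitFunctionOfProdDomain hinv).self_of_nhds.1 rfl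
  · refine (hswap.hasStrictFDerivAt_implicitFunctionOfProdDomain hinv).congr_fderiv ?_
    rw [hpartial, ContinuousLinearMap.inverse_equiv]
    ext v
    simp [mul_comm]
  · simpa using! hswap.eventually_apply_implicitFunctionOfProdDomain hinv

end Calculus

/-- The cuspidal region `|x| ≤ m|y|³` with its vertex removed. Limits as `|x| ≤ m|y|³`, `y → 0` are
limits along `𝓝[cusp m] 0`. -/
def cusp (m : ℝ) : Set (ℝ × ℝ) := {q | q.2 ≠ 0 ∧ |q.1| ≤ m * |q.2| ^ 3}

section Cusp

variable {m : ℝ}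

lemma eventually_cusp_iff {P : ℝ × ℝ → Prop} :
    (∀ᶠ q in 𝓝[cusp m] 0, P q) ↔
      ∃ δ > 0, ∀ x y : ℝ, 0 < |y| → |y| ≤ δ → |x| ≤ m * |y| ^ 3 → P (x, y) := by
  rw [eventually_nhdsWithin_iff, Metric.eventually_nhds_iff]
  constructor
  · rintro ⟨r, hr, h⟩
    refine ⟨min 1 (r / (2 * (1 + |m|))), by positivity, fun x y hy0 hy hx => ?_⟩
    have hyr : |y| * (2 * (1 + |m|)) ≤ r :=
      (le_div_iff₀ (by positivity)).1 (hy.trans (min_le_right _ _))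
    have hcube : |y| ^ 3 ≤ |y| :=
      pow_le_of_le_one hy0.le (hy.trans (min_le_left _ _)) three_ne_zero
    have hxy : |x| ≤ |m| * |y| := hx.trans (by gcongr; exact le_abs_self m)
    refine h ?_ ⟨abs_pos.1 hy0, hx⟩
    rw [dist_zero_right, Prod.norm_def, Real.norm_eq_abs, Real.norm_eq_abs, sup_lt_iff]
    constructor <;> nlinarith [mul_nonneg (abs_nonneg m) hy0.le]
  · rintro ⟨δ, hδ, h⟩
    refine ⟨δ, hδ, fun q hq hqm => h q.1 q.2 (abs_pos.2 hqm.1) ?_ hqm.2⟩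
    rw [dist_zero_right] at hq
    exact (norm_snd_le q).trans hq.le

lemma tendsto_cusp_zero_iff {u : ℝ × ℝ → ℝ} :
    Tendsto u (𝓝[cusp m] 0) (𝓝 0) ↔ ∀ ε > 0, ∃ δ > 0, ∀ x y : ℝ,
      0 < |y| → |y| ≤ δ → |x| ≤ m * |y| ^ 3 → |u (x, y)| ≤ ε := by
  simp only [Metric.nhds_basis_closedBall.tendsto_right_iff, mem_closedBall_zero_iff,
    Real.norm_eq_abs, eventually_cusp_iff]

lemma eventually_cusp_snd_ne_zero : ∀ᶠ q in 𝓝[cusp m] (0 : ℝ × ℝ), q.2 ≠ 0 :=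
  eventually_mem_nhdsWithin.mono fun _ hq => hq.1

lemma tendsto_snd_cusp : Tendsto Prod.snd (𝓝[cusp m] (0 : ℝ × ℝ)) (𝓝 0) :=
  (continuous_snd.tendsto' 0 0 rfl).mono_left nhdsWithin_le_nhds

lemma isBigO_fst_cusp : Prod.fst =O[𝓝[cusp m] (0 : ℝ × ℝ)] fun q => q.2 ^ 3 :=
  .of_bound m <| eventually_mem_nhdsWithin.mono fun _ hq => by simpa using hq.2

lemma isLittleO_snd_of_isBigO_pow {u : ℝ × ℝ → ℝ} {n : ℕ} (hn : 1 < n)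
    (hu : u =O[𝓝[cusp m] 0] fun q => q.2 ^ n) : u =o[𝓝[cusp m] 0] Prod.snd := by
  simpa using! hu.trans_isLittleO ((isLittleO_pow_pow hn).comp_tendsto tendsto_snd_cusp)

lemma tendsto_fst_div_mul_zero {u : ℝ × ℝ → ℝ} (hu : Tendsto u (𝓝[cusp m] 0) (𝓝 0)) :
    Tendsto (fun q => q.1 / q.2 ^ 3 * u q) (𝓝[cusp m] 0) (𝓝 0) := by
  have hmul := (isBigO_fst_cusp (m := m)).mul_isLittleO ((isLittleO_one_iff ℝ).2 hu)
  simpa [mul_div_right_comm] using hmul.tendsto_div_nhds_zero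

lemma uniqueDiffWithinAt_cusp_fst (hm : 0 < m) {q : ℝ × ℝ} (hq : q ∈ cusp m) :
    UniqueDiffWithinAt ℝ {s | (s, q.2) ∈ cusp m} q.1 := by
  have hwidth : 0 < m * |q.2| ^ 3 := mul_pos hm (pow_pos (abs_pos.2 hq.1) 3)
  refine (uniqueDiffOn_Icc (neg_lt_self hwidth) q.1 (abs_le.1 hq.2)).mono fun s hs => ?_
  exact ⟨hq.1, abs_le.2 hs⟩

lemma uniqueDiffWithinAt_cusp_snd {q : ℝ × ℝ} (hq : q ∈ cusp m) :
    UniqueDiffWithinAt ℝ {s | (q.1, s) ∈ cusp m} q.2 := by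
  have hm : 0 ≤ m :=
    nonneg_of_mul_nonneg_left ((abs_nonneg q.1).trans hq.2) (pow_pos (abs_pos.2 hq.1) 3)
  have mem_of_abs_le {s : ℝ} (hs : |q.2| ≤ |s|) : (q.1, s) ∈ cusp m :=
    ⟨abs_pos.1 ((abs_pos.2 hq.1).trans_le hs), hq.2.trans (by gcongr)⟩
  rcases hq.1.lt_or_gt with hneg | hpos
  · refine (uniqueDiffOn_Iic q.2 q.2 self_mem_Iic).mono fun s (hs : s ≤ q.2) => mem_of_abs_le ?_
    rw [abs_of_neg hneg, abs_of_neg (hs.trans_lt hneg)]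
    exact neg_le_neg hs
  · refine (uniqueDiffOn_Ici q.2 q.2 self_mem_Ici).mono fun s (hs : q.2 ≤ s) => mem_of_abs_le ?_
    rwa [abs_of_pos hpos, abs_of_pos (hpos.trans_le hs)]

lemma abs_pdx_le_of_hasFDerivWithinAt_cusp (hm : 0 < m) {R : ℝ → ℝ → ℝ} {R' : ℝ × ℝ →L[ℝ] ℝ}
    {q : ℝ × ℝ} (hq : q ∈ cusp m)
    (hR : HasFDerivWithinAt (fun q : ℝ × ℝ => R q.1 q.2) R' (cusp m) q) :
    |pdx R q.1 q.2| ≤ |R' (1, 0)| :=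
  norm_deriv_le_of_hasDerivWithinAt (uniqueDiffWithinAt_cusp_fst hm hq) <|
    hR.comp_hasDerivWithinAt (f := fun s => (s, q.2)) q.1
      ((hasDerivWithinAt_id _ _).prodMk (hasDerivWithinAt_const _ _ _)) fun _ hs => hs

lemma abs_pdy_le_of_hasFDerivWithinAt_cusp {R : ℝ → ℝ → ℝ} {R' : ℝ × ℝ →L[ℝ] ℝ}
    {q : ℝ × ℝ} (hq : q ∈ cusp m)
    (hR : HasFDerivWithinAt (fun q : ℝ × ℝ => R q.1 q.2) R' (cusp m) q) :
    |pdy R q.1 q.2| ≤ |R' (0, 1)| :=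
  norm_deriv_le_of_hasDerivWithinAt (uniqueDiffWithinAt_cusp_snd hq) <|
    hR.comp_hasDerivWithinAt (f := fun s => (q.1, s)) q.2
      ((hasDerivWithinAt_const _ _ _).prodMk (hasDerivWithinAt_id _ _)) fun _ hs => hs

lemma tendsto_pdx_mul_snd_of_hasFDerivWithinAt_cusp (hm : 0 < m) {R : ℝ → ℝ → ℝ}
    {R' : ℝ × ℝ → ℝ × ℝ →L[ℝ] ℝ} (hR : ∀ᶠ q in 𝓝[cusp m] 0,
      HasFDerivWithinAt (fun q : ℝ × ℝ => R q.1 q.2) (R' q) (cusp m) q)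
    (hlim : Tendsto (fun q => R' q (1, 0) * q.2) (𝓝[cusp m] 0) (𝓝 0)) :
    Tendsto (fun q => pdx R q.1 q.2 * q.2) (𝓝[cusp m] 0) (𝓝 0) := by
  refine IsBigO.trans_tendsto (.of_norm_eventuallyLE ?_) (tendsto_zero_iff_norm_tendsto_zero.1 hlim)
  filter_upwards [hR, eventually_mem_nhdsWithin] with q hRq hq
  simp only [norm_mul, Real.norm_eq_abs]
  exact mul_le_mul_of_nonneg_right (abs_pdx_le_of_hasFDerivWithinAt_cusp hm hq hRq)
    (abs_nonneg _)

lemma tendsto_pdy_div_snd_of_hasFDerivWithinAt_cusp {R : ℝ → ℝ → ℝ}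
    {R' : ℝ × ℝ → ℝ × ℝ →L[ℝ] ℝ} (hR : ∀ᶠ q in 𝓝[cusp m] 0,
      HasFDerivWithinAt (fun q : ℝ × ℝ => R q.1 q.2) (R' q) (cusp m) q)
    (hlim : Tendsto (fun q => R' q (0, 1) / q.2) (𝓝[cusp m] 0) (𝓝 0)) :
    Tendsto (fun q => pdy R q.1 q.2 / q.2) (𝓝[cusp m] 0) (𝓝 0) := by
  refine IsBigO.trans_tendsto (.of_norm_eventuallyLE ?_) (tendsto_zero_iff_norm_tendsto_zero.1 hlim)
  filter_upwards [hR, eventually_mem_nhdsWithin] with q hRq hq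
  simp only [norm_div, Real.norm_eq_abs]
  exact div_le_div_of_nonneg_right (abs_pdy_le_of_hasFDerivWithinAt_cusp hq hRq) (abs_nonneg _)

end Cusp
lemma exists_mem_uIcc_sub_eq_fderiv_mul {E : Type*} [NormedAddCommGroup E] [NormedSpace ℝ E]
    {u : ℝ × E → ℝ} {S : Set (ℝ × E)} (hS : Convex ℝ S) (hu : ∀ p ∈ S, DifferentiableAt ℝ u p)
    {s₁ s₂ : ℝ} {q : E} (h₁ : (s₁, q) ∈ S) (h₂ : (s₂, q) ∈ S) :
    ∃ θ ∈ uIcc s₁ s₂, u (s₁, q) - u (s₂, q) = fderiv ℝ u (θ, q) (1, 0) * (s₁ - s₂) := by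
  obtain ⟨z, hz, hsub⟩ :=
    domain_mvt (fun p hp => (hu p hp).hasFDerivAt.hasFDerivWithinAt) hS h₂ h₁
  rw [← Prod.image_mk_segment_left, segment_symm, segment_eq_uIcc] at hz
  obtain ⟨θ, hθ, rfl⟩ := hz
  have hdir : (s₁, q) - (s₂, q) = (s₁ - s₂) • ((1, 0) : ℝ × E) := by simp
  exact ⟨θ, hθ, by rw [hsub, hdir, map_smul, smul_eq_mul, mul_comm]⟩

section QuadraticTime

variable {m : ℝ} {t : ℝ × ℝ → ℝ} (ht : t =O[𝓝[cusp m] 0] fun q => q.2 ^ 2)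

include ht

lemma tendsto_time_mk_cusp :
    Tendsto (fun q => (t q, q)) (𝓝[cusp m] 0) (𝓝 (0 : ℝ × ℝ × ℝ)) :=
  Tendsto.prodMk_nhds
    ((isLittleO_snd_of_isBigO_pow one_lt_two ht).trans_tendsto tendsto_snd_cusp)
    nhdsWithin_le_nhds

lemma tendsto_div_snd_of_hasFDerivAt {u : ℝ × ℝ × ℝ → ℝ} {u' : ℝ × ℝ × ℝ →L[ℝ] ℝ}
    (hu : HasFDerivAt u u' 0) (h0 : u 0 = 0) :
    Tendsto (fun q => u (t q, q) / q.2) (𝓝[cusp m] 0) (𝓝 (u' (0, 0, 1))) := by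
  have hdir : Tendsto (fun q => q.2⁻¹ • (t q, q)) (𝓝[cusp m] 0) (𝓝 ((0, 0, 1) : ℝ × ℝ × ℝ)) := by
    have htime := (isLittleO_snd_of_isBigO_pow one_lt_two ht).tendsto_div_nhds_zero
    have hfst := (isLittleO_snd_of_isBigO_pow (m := m) (by norm_num)
      isBigO_fst_cusp).tendsto_div_nhds_zero
    refine (htime.prodMk_nhds (hfst.prodMk_nhds tendsto_const_nhds)).congr' ?_
    filter_upwards [eventually_cusp_snd_ne_zero] with q hy
    ext <;> simp [div_eq_inv_mul, hy]
  have hlim := hu.hasFDerivWithinAt.lim (s := univ) (tendsto_time_mk_cusp ht)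
    (.of_forall fun _ => mem_univ _) hdir
  simpa [h0, div_eq_inv_mul] using hlim

lemma tendsto_fderiv_apply_time {u : ℝ × ℝ × ℝ → ℝ} (hu : ContDiffAt ℝ 2 u 0) (v : ℝ × ℝ × ℝ) :
    Tendsto (fun q => fderiv ℝ u (t q, q) v) (𝓝[cusp m] 0) (𝓝 (fderiv ℝ u 0 v)) :=
  (hasStrictFDerivAt_fderiv_apply hu v).continuousAt.tendsto.comp (tendsto_time_mk_cusp ht)

lemma isLittleO_sub_of_hasStrictFDerivAt {u : ℝ × ℝ × ℝ → ℝ} {u' : ℝ × ℝ × ℝ →L[ℝ] ℝ}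
    (hu : HasStrictFDerivAt u u' 0) :
    (fun q => u (t q, q) - u (0, q) - t q * u' (1, 0)) =o[𝓝[cusp m] 0] fun q => q.2 ^ 2 := by
  have hpair := (tendsto_time_mk_cusp ht).prodMk_nhds
    (tendsto_time_mk_cusp (isBigO_zero (fun q => q.2 ^ 2) (𝓝[cusp m] 0)))
  have hsub (q : ℝ × ℝ) : (t q, q) - ((0 : ℝ), q) = t q • (1, 0) := by ext <;> simp
  have htime : (fun q => (t q, q) - ((0 : ℝ), q)) =O[𝓝[cusp m] 0] fun q => q.2 ^ 2 :=
    (ht.smul (isBigO_const_const _ one_ne_zero _)).congr (fun q => (hsub q).symm) (by simp)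
  refine ((hu.isLittleO.comp_tendsto hpair).congr_left fun q => ?_).trans_isBigO htime
  simp only [Function.comp_apply, hsub, map_smul, smul_eq_mul]

lemma isLittleO_fderiv_sub_of_forall_eq {u : ℝ × ℝ × ℝ → ℝ} {L : ℝ × ℝ →L[ℝ] ℝ}
    (hu : ContDiffAt ℝ 2 u 0) (h0 : ∀ q, u (0, q) = L q) (v : ℝ × ℝ) :
    (fun q => fderiv ℝ u (t q, q) (0, v) - L v - t q * fderiv ℝ (fderiv ℝ u) 0 (1, 0) (0, v))
      =o[𝓝[cusp m] 0] fun q => q.2 ^ 2 := by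
  have hdiff : ∀ᶠ p in 𝓝 0, DifferentiableAt ℝ u p :=
    (hu.eventually (by simp)).mono fun _ hp => hp.differentiableAt two_ne_zero
  have hslice := tendsto_time_mk_cusp (isBigO_zero (fun q => q.2 ^ 2) (𝓝[cusp m] 0))
  refine (isLittleO_sub_of_hasStrictFDerivAt ht (hasStrictFDerivAt_fderiv_apply hu (0, v))).congr'
    ?_ .rfl
  filter_upwards [hslice.eventually hdiff] with q hq
  rw [fderiv_apply_inr_of_forall_eq hq h0, ContinuousLinearMap.flip_apply]

end QuadraticTime

/-- The germ at the origin of the first component `φ (t, x, y)` of a planar flow whose velocity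
`∂φ/∂t` vanishes at the origin and has `y`-derivative `a ≠ 0` there, so that to leading order the
flow is the shear `x ↦ x + a t y`. -/
structure ShearJet (φ : ℝ × ℝ × ℝ → ℝ) (a : ℝ) : Prop where
  contDiffAt : ContDiffAt ℝ 2 φ 0
  initial : ∀ q : ℝ × ℝ, φ (0, q) = q.1
  velocity_zero : fderiv ℝ φ 0 (1, 0) = 0
  fderiv_velocity : fderiv ℝ (fderiv ℝ φ) 0 (0, 0, 1) (1, 0) = a
  ne_zero : a ≠ 0

/-- The derivative at `q`, by implicit differentiation, of the solution `t = T q` of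
`φ (t, q) = -q.1` through the point `p = (t, q)`; it is `0` where the velocity `∂φ/∂t` vanishes. -/
noncomputable def reflectionTimeDeriv (φ : ℝ × ℝ × ℝ → ℝ) (p : ℝ × ℝ × ℝ) : ℝ × ℝ →L[ℝ] ℝ :=
  -(fderiv ℝ φ p (1, 0))⁻¹ • ((fderiv ℝ φ p).comp (.inr ℝ ℝ (ℝ × ℝ)) + .fst ℝ ℝ ℝ)

lemma reflectionTimeDeriv_apply (φ : ℝ × ℝ × ℝ → ℝ) (p : ℝ × ℝ × ℝ) (v : ℝ × ℝ) :
    reflectionTimeDeriv φ p v = -((fderiv ℝ φ p (1, 0))⁻¹ * (fderiv ℝ φ p (0, v) + v.1)) :=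
  neg_mul _ _

lemma exists_hasStrictFDerivAt_reflectionTimeDeriv {φ : ℝ × ℝ × ℝ → ℝ} {p : ℝ × ℝ × ℝ}
    (hφ : HasStrictFDerivAt φ (fderiv ℝ φ p) p) (hvel : fderiv ℝ φ p (1, 0) ≠ 0) :
    ∃ τ : ℝ × ℝ → ℝ, τ p.2 = p.1 ∧ HasStrictFDerivAt τ (reflectionTimeDeriv φ p) p.2 ∧
      ∀ᶠ q in 𝓝 p.2, φ (τ q, q) + q.1 = φ p + p.2.1 := by
  have hΦ := hφ.fun_add
    ((ContinuousLinearMap.fst ℝ ℝ ℝ).comp (.snd ℝ ℝ (ℝ × ℝ))).hasStrictFDerivAt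
  obtain ⟨τ, hτp, hτ, hτeq⟩ := exists_hasStrictFDerivAt_implicit_fst hΦ (by simpa using hvel)
  refine ⟨τ, hτp, hτ.congr_fderiv (ContinuousLinearMap.ext fun v => ?_), hτeq⟩
  simp [reflectionTimeDeriv_apply, mul_add, add_comm]

/-- The remainder `ψ (T q, q) - y - β x / y`, `q = (x, y)`, of the return map `q ↦ ψ (T q, q)` of
a flow with second component `ψ`. -/
noncomputable def returnRemainder (ψ : ℝ × ℝ × ℝ → ℝ) (T : ℝ × ℝ → ℝ) (β : ℝ) (q : ℝ × ℝ) : ℝ :=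
  ψ (T q, q) - q.2 - β * q.1 / q.2

/-- The derivative of `returnRemainder ψ T β` at `q`, when `T` solves `φ (T q, q) = -q.1`. -/
noncomputable def returnRemainderDeriv (φ ψ : ℝ × ℝ × ℝ → ℝ) (T : ℝ × ℝ → ℝ) (β : ℝ)
    (q : ℝ × ℝ) : ℝ × ℝ →L[ℝ] ℝ :=
  (fderiv ℝ ψ (T q, q)).comp ((reflectionTimeDeriv φ (T q, q)).prod (.id ℝ (ℝ × ℝ)))
    - .snd ℝ ℝ ℝ - β • (q.2⁻¹ • .fst ℝ ℝ ℝ - (q.1 / q.2 ^ 2) • .snd ℝ ℝ ℝ)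

lemma returnRemainderDeriv_apply (φ ψ : ℝ × ℝ × ℝ → ℝ) (T : ℝ × ℝ → ℝ) (β : ℝ) (q v : ℝ × ℝ) :
    returnRemainderDeriv φ ψ T β q v =
      fderiv ℝ ψ (T q, q) (1, 0) * reflectionTimeDeriv φ (T q, q) v + fderiv ℝ ψ (T q, q) (0, v)
        - v.2 - β * (v.1 / q.2 - q.1 * v.2 / q.2 ^ 2) := by
  have hsplit (s : ℝ) : ((s, v) : ℝ × ℝ × ℝ) = s • (1, 0) + (0, v) := by ext <;> simp
  change fderiv ℝ ψ (T q, q) (reflectionTimeDeriv φ (T q, q) v, v) - v.2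
    - β * (q.2⁻¹ * v.1 - q.1 / q.2 ^ 2 * v.2) = _
  rw [hsplit, map_add, map_smul, smul_eq_mul]
  ring

namespace ShearJet

variable {φ : ℝ × ℝ × ℝ → ℝ} {a m : ℝ} {t : ℝ × ℝ → ℝ}

lemma eventually_contDiffAt (h : ShearJet φ a) : ∀ᶠ p in 𝓝 0, ContDiffAt ℝ 2 φ p :=
  h.contDiffAt.eventually (by simp)

lemma tendsto_velocity_div (h : ShearJet φ a) (ht : t =O[𝓝[cusp m] 0] fun q => q.2 ^ 2) :
    Tendsto (fun q => fderiv ℝ φ (t q, q) (1, 0) / q.2) (𝓝[cusp m] 0) (𝓝 a) :=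
  h.fderiv_velocity ▸ tendsto_div_snd_of_hasFDerivAt ht
    (hasStrictFDerivAt_fderiv_apply h.contDiffAt (1, 0)).hasFDerivAt h.velocity_zero

lemma eventually_velocity_ne_zero (h : ShearJet φ a) (ht : t =O[𝓝[cusp m] 0] fun q => q.2 ^ 2) :
    ∀ᶠ q in 𝓝[cusp m] 0, fderiv ℝ φ (t q, q) (1, 0) ≠ 0 :=
  ((h.tendsto_velocity_div ht).eventually_ne h.ne_zero).mono fun _ hq => (div_ne_zero_iff.1 hq).1

lemma exists_tendsto_forall_sub_eq (h : ShearJet φ a) {t₁ t₂ : ℝ × ℝ → ℝ}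
    (ht₁ : t₁ =O[𝓝[cusp m] 0] fun q => q.2 ^ 2) (ht₂ : t₂ =O[𝓝[cusp m] 0] fun q => q.2 ^ 2) :
    ∃ w : ℝ × ℝ → ℝ, Tendsto w (𝓝[cusp m] 0) (𝓝 a) ∧
      ∀ᶠ q in 𝓝[cusp m] 0, φ (t₁ q, q) - φ (t₂ q, q) = w q * q.2 * (t₁ q - t₂ q) := by
  obtain ⟨r, hr, hdiff⟩ := Metric.eventually_nhds_iff_ball.1 h.eventually_contDiffAt
  have hmvt : ∀ᶠ q in 𝓝[cusp m] 0, ∃ θ ∈ uIcc (t₁ q) (t₂ q),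
      φ (t₁ q, q) - φ (t₂ q, q) = fderiv ℝ φ (θ, q) (1, 0) * (t₁ q - t₂ q) := by
    filter_upwards [(tendsto_time_mk_cusp ht₁).eventually (Metric.ball_mem_nhds 0 hr),
      (tendsto_time_mk_cusp ht₂).eventually (Metric.ball_mem_nhds 0 hr)] with q hq₁ hq₂
    exact exists_mem_uIcc_sub_eq_fderiv_mul (convex_ball 0 r)
      (fun p hp => (hdiff p hp).differentiableAt two_ne_zero) hq₁ hq₂
  obtain ⟨θ, hθ⟩ := skolem.1 hmvt
  have hθO : θ =O[𝓝[cusp m] 0] fun q => q.2 ^ 2 := by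
    refine IsBigO.trans (.of_norm_eventuallyLE ?_) (ht₁.norm_left.add ht₂.norm_left)
    filter_upwards [hθ] with q hq
    have hmax : max |t₁ q| |t₂ q| ≤ |t₁ q| + |t₂ q| :=
      max_le_add_of_nonneg (abs_nonneg _) (abs_nonneg _)
    rcases mem_uIcc.1 hq.1 with ⟨hl, hr⟩ | ⟨hl, hr⟩
    · exact (abs_le_max_abs_abs hl hr).trans hmax
    · exact (abs_le_max_abs_abs hl hr).trans (max_comm |t₂ q| _ ▸ hmax)
  refine ⟨_, h.tendsto_velocity_div hθO, ?_⟩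
  filter_upwards [eventually_cusp_snd_ne_zero, hθ] with q hy hq
  rw [hq.2, div_mul_cancel₀ _ hy]

lemma eventually_injOn (h : ShearJet φ a) {K : ℝ} (hK : 0 ≤ K) :
    ∀ᶠ q in 𝓝[cusp m] 0, InjOn (fun s => φ (s, q)) {s | |s| ≤ K * q.2 ^ 2} := by
  have hpair (q : ℝ × ℝ) : ∃ s₁ s₂, |s₁| ≤ K * q.2 ^ 2 ∧ |s₂| ≤ K * q.2 ^ 2 ∧
      φ (s₁, q) = φ (s₂, q) ∧
      (s₁ = s₂ → InjOn (fun s => φ (s, q)) {s | |s| ≤ K * q.2 ^ 2}) := by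
    by_cases hinj : InjOn (fun s => φ (s, q)) {s | |s| ≤ K * q.2 ^ 2}
    · have hzero : |(0 : ℝ)| ≤ K * q.2 ^ 2 := by rw [abs_zero]; positivity
      exact ⟨0, 0, hzero, hzero, rfl, fun _ => hinj⟩
    · simp only [InjOn, not_forall] at hinj
      obtain ⟨s₁, hs₁, s₂, hs₂, heq, hne⟩ := hinj
      exact ⟨s₁, s₂, hs₁, hs₂, heq, fun h => absurd h hne⟩
  choose s₁ s₂ hs₁ hs₂ heq hinj using hpair
  have isBigO_of_abs_le {s : ℝ × ℝ → ℝ} (hs : ∀ q, |s q| ≤ K * q.2 ^ 2) :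
      s =O[𝓝[cusp m] 0] fun q => q.2 ^ 2 := .of_bound K <| .of_forall fun q => by simpa using hs q
  obtain ⟨w, hw, hsub⟩ :=
    h.exists_tendsto_forall_sub_eq (isBigO_of_abs_le hs₁) (isBigO_of_abs_le hs₂)
  filter_upwards [eventually_cusp_snd_ne_zero, hw.eventually_ne h.ne_zero, hsub]
    with q hy hwq hsubq
  rw [heq, sub_self, eq_comm, mul_eq_zero_iff_left (mul_ne_zero hwq hy), sub_eq_zero] at hsubq
  exact hinj q hsubq

lemma fderiv_zero_apply_inr (h : ShearJet φ a) (v : ℝ × ℝ) : fderiv ℝ φ 0 (0, v) = v.1 :=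
  fderiv_apply_inr_of_forall_eq (p := 0) (L := .fst ℝ ℝ ℝ)
    (h.contDiffAt.differentiableAt two_ne_zero) h.initial v

section Reflection

variable {T : ℝ × ℝ → ℝ} (hTO : T =O[𝓝[cusp m] 0] fun q => q.2 ^ 2)

include hTO

lemma tendsto_reflectionTimeDeriv_fst_mul (h : ShearJet φ a) :
    Tendsto (fun q => reflectionTimeDeriv φ (T q, q) (1, 0) * q.2) (𝓝[cusp m] 0)
      (𝓝 (-2 / a)) := by
  have hφx : Tendsto (fun q => fderiv ℝ φ (T q, q) (0, 1, 0)) (𝓝[cusp m] 0) (𝓝 1) := by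
    simpa only [h.fderiv_zero_apply_inr] using
      tendsto_fderiv_apply_time hTO h.contDiffAt (0, 1, 0)
  have hlim := ((h.tendsto_velocity_div hTO).inv₀ h.ne_zero).mul (hφx.add_const 1) |>.neg
  convert hlim using 2 with q
  · simp only [reflectionTimeDeriv_apply]
    field_simp
  · ring

lemma tendsto_returnRemainderDeriv_fst_mul (h : ShearJet φ a) {ψ : ℝ × ℝ × ℝ → ℝ}
    (hψ : ContDiffAt ℝ 2 ψ 0) :
    Tendsto (fun q => returnRemainderDeriv φ ψ T (-2 * fderiv ℝ ψ 0 (1, 0) / a) q (1, 0) * q.2)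
      (𝓝[cusp m] 0) (𝓝 0) := by
  have hψt := tendsto_fderiv_apply_time hTO hψ (1, 0)
  have hψx := tendsto_fderiv_apply_time hTO hψ (0, 1, 0)
  have hlim := ((hψt.mul (h.tendsto_reflectionTimeDeriv_fst_mul hTO)).add
    (hψx.mul tendsto_snd_cusp)).sub_const (-2 * fderiv ℝ ψ 0 (1, 0) / a)
  rw [mul_zero, add_zero, ← mul_div_assoc, mul_comm _ (-2), sub_self] at hlim
  refine hlim.congr' ?_
  filter_upwards [eventually_cusp_snd_ne_zero] with q hy
  have ha := h.ne_zero
  simp only [returnRemainderDeriv_apply]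
  field_simp
  ring

variable (hT : ∀ᶠ q in 𝓝[cusp m] 0, φ (T q, q) = -q.1)

include hT

lemma isLittleO_time (h : ShearJet φ a) :
    (fun q => a * q.2 * T q + 2 * q.1) =o[𝓝[cusp m] 0] fun q => q.2 ^ 3 := by
  obtain ⟨w, hw, hsub⟩ := h.exists_tendsto_forall_sub_eq hTO
    (isBigO_zero (fun q => q.2 ^ 2) (𝓝[cusp m] 0))
  have hgap : (fun q => a - w q) =o[𝓝[cusp m] 0] fun _ => (1 : ℝ) := by
    rw [isLittleO_one_iff]
    simpa using hw.const_sub a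
  refine (hgap.mul_isBigO ((isBigO_refl Prod.snd _).mul hTO)).congr' ?_
    (.of_forall fun q => by ring)
  filter_upwards [hsub, hT] with q hq hTq
  rw [hTq, h.initial] at hq
  linear_combination hq

lemma eventually_hasFDerivWithinAt_time (h : ShearJet φ a) :
    ∀ᶠ q in 𝓝[cusp m] 0,
      HasFDerivWithinAt T (reflectionTimeDeriv φ (T q, q)) (cusp m) q := by
  obtain ⟨K, hK, hbound⟩ := hTO.exists_pos
  have hgood : ∀ᶠ q in 𝓝[cusp m] 0, φ (T q, q) = -q.1 ∧ |T q| ≤ K * q.2 ^ 2 ∧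
      InjOn (fun s => φ (s, q)) {s | |s| ≤ (K + 1) * q.2 ^ 2} := by
    filter_upwards [hT, hbound.bound, h.eventually_injOn (by positivity : 0 ≤ K + 1)]
      with q hTq hTK hinj
    exact ⟨hTq, by simpa using hTK, hinj⟩
  filter_upwards [eventually_eventually_nhdsWithin.2 hgood, hgood, eventually_mem_nhdsWithin,
    (tendsto_time_mk_cusp hTO).eventually h.eventually_contDiffAt,
    h.eventually_velocity_ne_zero hTO] with q₀ hnear ⟨hTq₀, hTK, _⟩ hq₀ hφ hvel
  obtain ⟨τ, hτ₀, hτ, hτeq⟩ :=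
    exists_hasStrictFDerivAt_reflectionTimeDeriv (hφ.hasStrictFDerivAt two_ne_zero) hvel
  have hτK : ∀ᶠ q in 𝓝 q₀, |τ q| < (K + 1) * q.2 ^ 2 := by
    refine hτ.hasFDerivAt.continuousAt.abs.eventually_lt (by fun_prop) ?_
    rw [hτ₀]
    nlinarith [sq_pos_of_ne_zero hq₀.1]
  have hTτ : T =ᶠ[𝓝[cusp m] q₀] τ := by
    filter_upwards [hnear, nhdsWithin_le_nhds hτK, nhdsWithin_le_nhds hτeq]
      with q ⟨hTq, hTq_le, hinj⟩ hτq_lt hτq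
    refine hinj (hTq_le.trans (by gcongr; linarith)) hτq_lt.le ?_
    linear_combination hTq - hτq - hTq₀
  exact hτ.hasFDerivAt.hasFDerivWithinAt.congr_of_eventuallyEq hTτ hτ₀.symm

lemma tendsto_fderiv_snd_div_add (h : ShearJet φ a) :
    Tendsto (fun q => fderiv ℝ φ (T q, q) (0, 0, 1) / q.2 ^ 2 + 2 * (q.1 / q.2 ^ 3))
      (𝓝[cusp m] 0) (𝓝 0) := by
  have hmixed : fderiv ℝ (fderiv ℝ φ) 0 (1, 0) (0, 0, 1) = a := by
    rw [(h.contDiffAt.isSymmSndFDerivAt (by simp)).eq, h.fderiv_velocity]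
  have hφy := isLittleO_fderiv_sub_of_forall_eq hTO h.contDiffAt (L := .fst ℝ ℝ ℝ) h.initial (0, 1)
  have hlim := hφy.tendsto_div_nhds_zero.add (h.isLittleO_time hTO hT).tendsto_div_nhds_zero
  rw [add_zero] at hlim
  refine hlim.congr' ?_
  filter_upwards [eventually_cusp_snd_ne_zero] with q hy
  simp only [hmixed, ContinuousLinearMap.coe_fst', sub_zero]
  field_simp
  ring

lemma tendsto_reflectionTimeDeriv_snd_div_sub (h : ShearJet φ a) :
    Tendsto (fun q => reflectionTimeDeriv φ (T q, q) (0, 1) / q.2 - 2 / a * (q.1 / q.2 ^ 3))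
      (𝓝[cusp m] 0) (𝓝 0) := by
  have hinv := (h.tendsto_velocity_div hTO).inv₀ h.ne_zero
  have hφy := hinv.mul (h.tendsto_fderiv_snd_div_add hTO hT)
  have hgap := tendsto_fst_div_mul_zero (tendsto_sub_nhds_zero_iff.2 hinv)
  have hlim := (hgap.const_mul 2).sub hφy
  rw [mul_zero, mul_zero, sub_zero] at hlim
  refine hlim.congr' ?_
  filter_upwards [eventually_cusp_snd_ne_zero] with q hy
  simp only [reflectionTimeDeriv_apply]
  field_simp
  ring

variable {ψ : ℝ × ℝ × ℝ → ℝ} (hψ : ContDiffAt ℝ 2 ψ 0) (hψ₀ : ∀ q : ℝ × ℝ, ψ (0, q) = q.2)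

include hψ

lemma eventually_hasFDerivWithinAt_returnRemainder (h : ShearJet φ a) (β : ℝ) :
    ∀ᶠ q in 𝓝[cusp m] 0, HasFDerivWithinAt (returnRemainder ψ T β)
      (returnRemainderDeriv φ ψ T β q) (cusp m) q := by
  filter_upwards [eventually_cusp_snd_ne_zero, h.eventually_hasFDerivWithinAt_time hTO hT,
    (tendsto_time_mk_cusp hTO).eventually (hψ.eventually (by simp))] with q hy hTq hψq
  have hreturn : HasFDerivWithinAt (fun q => ψ (T q, q)) _ (cusp m) q :=
    (hψq.differentiableAt two_ne_zero).hasFDerivAt.comp_hasFDerivWithinAt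
      (f := fun q => (T q, q)) q (hTq.prodMk (hasFDerivWithinAt_id q _))
  have hfst : HasFDerivWithinAt Prod.fst (.fst ℝ ℝ ℝ) (cusp m) q := hasFDerivWithinAt_fst
  have hsnd : HasFDerivWithinAt Prod.snd (.snd ℝ ℝ ℝ) (cusp m) q := hasFDerivWithinAt_snd
  have hquot := (hfst.const_mul β).fun_mul ((hasDerivAt_inv hy).comp_hasFDerivWithinAt q hsnd)
  simp only [Function.comp_apply, ← div_eq_mul_inv] at hquot
  exact ((hreturn.fun_sub hsnd).fun_sub hquot).congr_fderiv <| by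
    rw [returnRemainderDeriv]
    module

include hψ₀

lemma tendsto_returnRemainder_div_sq (h : ShearJet φ a) :
    Tendsto (fun q => returnRemainder ψ T (-2 * fderiv ℝ ψ 0 (1, 0) / a) q / q.2 ^ 2)
      (𝓝[cusp m] 0) (𝓝 0) := by
  have hdrift := (isLittleO_sub_of_hasStrictFDerivAt hTO
    (hψ.hasStrictFDerivAt two_ne_zero)).tendsto_div_nhds_zero
  have htime := ((h.isLittleO_time hTO hT).tendsto_div_nhds_zero).const_mul
    (fderiv ℝ ψ 0 (1, 0) / a)
  have hlim := hdrift.add htime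
  rw [mul_zero, add_zero] at hlim
  refine hlim.congr' ?_
  filter_upwards [eventually_cusp_snd_ne_zero] with q hy
  have ha := h.ne_zero
  simp only [returnRemainder, hψ₀]
  field_simp
  ring

lemma tendsto_returnRemainderDeriv_snd_div (h : ShearJet φ a) :
    Tendsto (fun q => returnRemainderDeriv φ ψ T (-2 * fderiv ℝ ψ 0 (1, 0) / a) q (0, 1) / q.2)
      (𝓝[cusp m] 0) (𝓝 0) := by
  have hψt := tendsto_fderiv_apply_time hTO hψ (1, 0)
  have hψy : Tendsto (fun q => (fderiv ℝ ψ (T q, q) (0, 0, 1) - 1) / q.2) (𝓝[cusp m] 0)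
      (𝓝 0) := by
    have hsub := isLittleO_fderiv_sub_of_forall_eq hTO hψ (L := .snd ℝ ℝ ℝ) hψ₀ (0, 1)
    have hbigO := hsub.isBigO.add
      (hTO.const_mul_left (fderiv ℝ (fderiv ℝ ψ) 0 (1, 0) (0, 0, 1)))
    exact (isLittleO_snd_of_isBigO_pow one_lt_two (hbigO.congr_left fun q => by
      simp [mul_comm])).tendsto_div_nhds_zero
  have htime := hψt.mul (h.tendsto_reflectionTimeDeriv_snd_div_sub hTO hT)
  have hgap := (tendsto_fst_div_mul_zero (tendsto_sub_nhds_zero_iff.2 hψt)).const_mul (2 / a)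
  have hlim := (htime.add hψy).add hgap
  simp only [mul_zero, add_zero] at hlim
  refine hlim.congr' ?_
  filter_upwards [eventually_cusp_snd_ne_zero] with q hy
  have ha := h.ne_zero
  simp only [returnRemainderDeriv_apply]
  field_simp
  ring

end Reflection

end ShearJet

lemma shearJet_of_ode {f : ℝ → ℝ → ℝ} {φ ψ : ℝ × ℝ × ℝ → ℝ} (hφ : ContDiffAt ℝ 2 φ 0)
    (hode : ∀ᶠ p in 𝓝 0, HasDerivAt (fun s => φ (s, p.2)) (f (φ p) (ψ p)) p.1)
    (hφ₀ : ∀ q : ℝ × ℝ, φ (0, q) = q.1) (hψ₀ : ∀ q : ℝ × ℝ, ψ (0, q) = q.2)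
    (hf0 : f 0 0 = 0) (hfy0 : pdy f 0 0 ≠ 0) : ShearJet φ (pdy f 0 0) := by
  have hvel : ∀ᶠ p in 𝓝 0, fderiv ℝ φ p (1, 0) = f (φ p) (ψ p) := by
    filter_upwards [hode, hφ.eventually (by simp)] with p hp hφp
    exact fderiv_apply_inl_of_hasDerivAt (hφp.differentiableAt two_ne_zero) hp
  refine ⟨hφ, hφ₀, ?_, ?_, hfy0⟩
  · rw [hvel.self_of_nhds, ← Prod.mk_zero_zero, hφ₀, hψ₀]
    exact hf0
  · have haxis : HasDerivAt (fun y : ℝ => ((0, 0, y) : ℝ × ℝ × ℝ)) (0, 0, 1) 0 :=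
      (hasDerivAt_const _ _).prodMk ((hasDerivAt_const _ _).prodMk (hasDerivAt_id _))
    have hvel_axis : (fun y : ℝ => fderiv ℝ φ (0, 0, y) (1, 0)) =ᶠ[𝓝 0] f 0 := by
      filter_upwards [haxis.continuousAt.tendsto.eventually hvel] with y hy
      rw [hy, hφ₀, hψ₀]
    rw [pdy, ← hvel_axis.deriv_eq]
    exact ((hasStrictFDerivAt_fderiv_apply hφ (1, 0)).hasFDerivAt.comp_hasDerivAt
      (f := fun y : ℝ => ((0, 0, y) : ℝ × ℝ × ℝ)) 0 haxis).deriv.symm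

theorem stmt_4_general {f g : ℝ → ℝ → ℝ} {X Y : ℝ → ℝ → ℝ → ℝ}
    (hX : ContDiffAt ℝ 2 (fun p : ℝ × ℝ × ℝ => X p.1 p.2.1 p.2.2) 0)
    (hY : ContDiffAt ℝ 2 (fun p : ℝ × ℝ × ℝ => Y p.1 p.2.1 p.2.2) 0)
    (hode : ∀ᶠ p : ℝ × ℝ × ℝ in 𝓝 0,
      HasDerivAt (fun s => X s p.2.1 p.2.2)
        (f (X p.1 p.2.1 p.2.2) (Y p.1 p.2.1 p.2.2)) p.1 ∧
      HasDerivAt (fun s => Y s p.2.1 p.2.2)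
        (g (X p.1 p.2.1 p.2.2) (Y p.1 p.2.1 p.2.2)) p.1)
    (hinit : ∀ x y : ℝ, X 0 x y = x ∧ Y 0 x y = y) (hf0 : f 0 0 = 0) (hfy0 : pdy f 0 0 ≠ 0)
    {m K : ℝ} (hm : 0 < m) {T : ℝ → ℝ → ℝ}
    (hT : ∀ᶠ q in 𝓝[cusp m] 0,
      X (T q.1 q.2) q.1 q.2 = -q.1 ∧ |T q.1 q.2| ≤ K * q.2 ^ 2) {R : ℝ → ℝ → ℝ}
    (hR : ∀ x y, R x y = Y (T x y) x y - y - -2 * g 0 0 / pdy f 0 0 * x / y) :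
    Tendsto (fun q : ℝ × ℝ => R q.1 q.2 / q.2 ^ 2) (𝓝[cusp m] 0) (𝓝 0) ∧
    Tendsto (fun q : ℝ × ℝ => pdy R q.1 q.2 / q.2) (𝓝[cusp m] 0) (𝓝 0) ∧
    Tendsto (fun q : ℝ × ℝ => pdx R q.1 q.2 * q.2) (𝓝[cusp m] 0) (𝓝 0) := by
  have hTO : (fun q : ℝ × ℝ => T q.1 q.2) =O[𝓝[cusp m] 0] fun q => q.2 ^ 2 :=
    .of_bound K <| hT.mono fun q hq => by simpa using hq.2
  replace hT := hT.mono fun _ hq => hq.1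
  have hjet := shearJet_of_ode hX (hode.mono fun _ hp => hp.1) (fun q => (hinit q.1 q.2).1)
    (fun q => (hinit q.1 q.2).2) hf0 hfy0
  have hY₀ (q : ℝ × ℝ) : Y 0 q.1 q.2 = q.2 := (hinit q.1 q.2).2
  have hdrift : fderiv ℝ (fun p : ℝ × ℝ × ℝ => Y p.1 p.2.1 p.2.2) 0 (1, 0) = g 0 0 :=
    fderiv_apply_inl_of_hasDerivAt (hY.differentiableAt two_ne_zero) <| by
      simpa [hinit] using hode.self_of_nhds.2
  rw [← hdrift] at hR
  have hremainder : (fun q : ℝ × ℝ => R q.1 q.2) =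
      returnRemainder (fun p => Y p.1 p.2.1 p.2.2) (fun q => T q.1 q.2) _ :=
    funext fun q => hR q.1 q.2
  have hderiv := hremainder ▸ hjet.eventually_hasFDerivWithinAt_returnRemainder hTO hT hY _
  exact ⟨by simpa only [hR, returnRemainder] using
      hjet.tendsto_returnRemainder_div_sq hTO hT hY hY₀,
    tendsto_pdy_div_snd_of_hasFDerivWithinAt_cusp hderiv
      (hjet.tendsto_returnRemainderDeriv_snd_div hTO hT hY hY₀),
    tendsto_pdx_mul_snd_of_hasFDerivWithinAt_cusp hm hderiv
      (hjet.tendsto_returnRemainderDeriv_fst_mul hTO hY)⟩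

/-- Lemma 2.2, second part: the map `𝒫̃(x,y) = Y(T̃(x,y),x,y)` expands as
`𝒫̃(y) = y + β x/y + ℛ̃(x,y)` with `ℛ̃/y² → 0`, `ℛ̃'_y/y → 0` and `ℛ̃'_x·y → 0`
as `|x| ≤ m|y|³`, `y → 0`. -/
theorem stmt_4
    (f g : ℝ → ℝ → ℝ) (X Y : ℝ → ℝ → ℝ → ℝ)
    (U : Set (ℝ × ℝ)) (hU : U ∈ nhds ((0 : ℝ), (0 : ℝ)))
    (hf : ContDiffOn ℝ 4 (fun p : ℝ × ℝ => f p.1 p.2) U)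
    (hg : ContDiffOn ℝ 4 (fun p : ℝ × ℝ => g p.1 p.2) U)
    (V : Set (ℝ × ℝ × ℝ)) (hV : V ∈ nhds (((0 : ℝ), (0 : ℝ), (0 : ℝ)) : ℝ × ℝ × ℝ))
    (hX : ContDiffOn ℝ 4 (fun p : ℝ × ℝ × ℝ => X p.1 p.2.1 p.2.2) V)
    (hY : ContDiffOn ℝ 4 (fun p : ℝ × ℝ × ℝ => Y p.1 p.2.1 p.2.2) V)
    (hode : ∀ t x y : ℝ, (t, x, y) ∈ V →
      HasDerivAt (fun s => X s x y) (f (X t x y) (Y t x y)) t ∧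
      HasDerivAt (fun s => Y s x y) (g (X t x y) (Y t x y)) t)
    (hinit : ∀ x y : ℝ, X 0 x y = x ∧ Y 0 x y = y)
    (hf0 : f 0 0 = 0)
    (hfy0 : pdy f 0 0 ≠ 0)
    (m : ℝ) (hm : 0 < m) (δ₀ : ℝ) (hδ₀ : 0 < δ₀)
    (Tt : ℝ → ℝ → ℝ)
    (hTt : ∀ x y : ℝ, |x| ≤ m * |y| ^ 3 → 0 < |y| → |y| ≤ δ₀ →
      X (Tt x y) x y = -x ∧
      |Tt x y| ≤ 4 * m / |pdy f 0 0| * y ^ 2 ∧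
      ∀ t : ℝ, |t| ≤ 4 * m / |pdy f 0 0| * y ^ 2 → X t x y = -x → t = Tt x y)
    (Pt : ℝ → ℝ → ℝ) (hPt : ∀ x y, Pt x y = Y (Tt x y) x y)
    (β : ℝ) (hβ : β = -2 * g 0 0 / pdy f 0 0)
    (Rt : ℝ → ℝ → ℝ) (hRt : ∀ x y, Rt x y = Pt x y - y - β * x / y) :
    (∀ ε > (0 : ℝ), ∃ δ > (0 : ℝ), ∀ x y : ℝ,
      0 < |y| → |y| ≤ δ → |x| ≤ m * |y| ^ 3 → |Rt x y / y ^ 2| ≤ ε) ∧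
    (∀ ε > (0 : ℝ), ∃ δ > (0 : ℝ), ∀ x y : ℝ,
      0 < |y| → |y| ≤ δ → |x| ≤ m * |y| ^ 3 → |pdy Rt x y / y| ≤ ε) ∧
    (∀ ε > (0 : ℝ), ∃ δ > (0 : ℝ), ∀ x y : ℝ,
      0 < |y| → |y| ≤ δ → |x| ≤ m * |y| ^ 3 → |pdx Rt x y * y| ≤ ε) := by
  simpa only [tendsto_cusp_zero_iff] using stmt_4_general
    ((hX.contDiffAt hV).of_le (by norm_num)) ((hY.contDiffAt hV).of_le (by norm_num))
    (eventually_of_mem hV fun p => hode p.1 p.2.1 p.2.2) hinit hf0 hfy0 hm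
    (eventually_cusp_iff.2 ⟨δ₀, hδ₀, fun x y hy hyδ hx => (hTt x y hx hy hyδ).imp_right And.left⟩)
    fun x y => by rw [hRt, hPt, hβ]
end
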